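/- Let b ≥ 2 be an integer, γ ∈ (0,1), and let φ : ℝ → ℝ be a ℤ-periodic Lipschitz function satisfying condition (H). Then the family of measures {m_x}_{x∈[0,1]} is jointly uniformly continuous across scales: for every ε > 0 there exists δ > 0 such that for every x ∈ [0,1], every y ∈ ℝ and every r ∈ (0,1), m_x(B(y, δr)) ≤ ε · m_x(B(y, r)). -/

import Mathlib

/-!
The measures `m_x` satisfy `m_x = b⁻¹ ∑_a (f_{x,a})_* m_{(x+a)/b}` with
`f_{x,a}(t) = φ((x+a)/b) + γ t` (`mMeas_ball_step`), and all of them live in `[-M, M]`. The theorem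
follows from this relation in two steps.

*Uniform smallness of small balls* (`exists_uniform_small`). Condition (H) gives one point `z` at
which `S(z,·)` is not constant, hence, by continuity, `|S(x,i) - S(x,j)|` is bounded below for `x`
near `z`. Since every `x ∈ [0,1]` has an inverse branch `w(x)` near `z`, with `|w|` bounded, there is
`η > 0` such that `S(x,·)` oscillates by at least `η` for *every* `x ∈ [0,1]` (`uniform_spread`).
Consequently a ball of radius much smaller than `η` misses the image of at least one cylinder of some
fixed length `n`, and if `m_x(B(y,d)) ≤ c` for all `x, y`, then
`m_x(B(y,γⁿ d)) ≤ (1 - b⁻ⁿ) c` for all `x, y` (`gain`). Iterating this gives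
`sup_{x,y} m_x(B(y,d)) → 0` as `d → 0`.

*Transfer to all scales* (`scaling`). If `m_x(B(y,d)) ≤ ε` for all `x, y`, and `R ≥ 2M + d`, then
`m_x(B(y,d)) ≤ ε m_x(B(y,R))`, because either `B(y,d)` misses `[-M,M]` or `B(y,R)` contains it. The
self-similarity relation propagates this inequality to the radii `γⁿ d` and `γⁿ R`, and an arbitrary
`r ∈ (0,1)` is comparable to some `γⁿ R`.
-/


open MeasureTheory Set Filter
open scoped ENNReal NNReal Topology

namespace Skew

noncomputable section

variable (b : ℕ) (γ : ℝ) (φ : ℝ → ℝ)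

/-- `j₁ + j₂ b + ⋯ + jₙ b^{n-1}`, the integer part determined by the first `n`
digits of the sequence `j`. -/
def sval (j : ℕ → Fin b) (n : ℕ) : ℕ := ∑ k ∈ Finset.range n, (j k).val * b ^ k

/-- `S(x,j) = Σ_{n≥1} γ^{n-1} φ((x + j₁ + j₂ b + ⋯ + jₙ b^{n-1})/bⁿ)` for an infinite
sequence `j ∈ Σ = Λ^{ℤ₊}`. -/
def S (x : ℝ) (j : ℕ → Fin b) : ℝ :=
  ∑' n : ℕ, γ ^ n * φ ((x + sval b j (n + 1)) / (b : ℝ) ^ (n + 1))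

/-- value of a finite word: first letter has weight `b^0`. -/
def lval : List (Fin b) → ℕ
  | [] => 0
  | a :: w => a.val + b * lval w

/-- `S(x,w)` for a finite word `w ∈ Λ^#`. -/
def Sfin (x : ℝ) (w : List (Fin b)) : ℝ :=
  ∑ n ∈ Finset.range w.length, γ ^ n * φ ((x + lval b (w.take (n + 1))) / (b : ℝ) ^ (n + 1))

/-- concatenation of a finite word with an infinite sequence. -/
def cat (w : List (Fin b)) (j : ℕ → Fin b) : ℕ → Fin b :=
  fun n => if h : n < w.length then w.get ⟨n, h⟩ else j (n - w.length)

/-- `w(x) = (x + w₁ + w₂ b + ⋯ + wₙ b^{n-1})/bⁿ`. -/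
def pt (w : List (Fin b)) (x : ℝ) : ℝ := (x + lval b w) / (b : ℝ) ^ w.length

/-- the `b`-adic interval `I_w = [w(0), w(0) + b^{-|w|})`. -/
def Iword (w : List (Fin b)) : Set ℝ :=
  Ico (pt b w 0) (pt b w 0 + ((b : ℝ) ^ w.length)⁻¹)

/-- value of a word given as a function `Fin n → Fin b`. -/
def fval {n : ℕ} (w : Fin n → Fin b) : ℕ := ∑ k : Fin n, (w k).val * b ^ (k : ℕ)

/-- `w(x)` for a word given as a function `Fin n → Fin b`. -/
def fpt {n : ℕ} (w : Fin n → Fin b) (x : ℝ) : ℝ := (x + fval b w) / (b : ℝ) ^ n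

/-- `ν` is the Bernoulli product measure `ν^{ℤ₊}` of uniform measures on `Λ = Fin b`:
a probability measure giving each cylinder of length `n` measure `b^{-n}`.  (These
conditions determine the measure uniquely.) -/
def IsBernoulli (ν : Measure (ℕ → Fin b)) : Prop :=
  IsProbabilityMeasure ν ∧
    ∀ (n : ℕ) (w : Fin n → Fin b), ν {j | ∀ k : Fin n, j k = w k} = ((b : ℝ≥0∞) ^ n)⁻¹

/-- the measure `m_x`, pushforward of `ν^{ℤ₊}` under `j ↦ S(x,j)`. -/
def mMeas (ν : Measure (ℕ → Fin b)) (x : ℝ) : Measure ℝ := ν.map (S b γ φ x)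

/-- the SRB measure `ω`: pushforward of `Leb|_{[0,1)} × ν^{ℤ₊}` under `(x,j) ↦ (x, S(x,j))`. -/
def srb (ν : Measure (ℕ → Fin b)) : Measure (ℝ × ℝ) :=
  ((volume.restrict (Ico (0 : ℝ) 1)).prod ν).map fun p => (p.1, S b γ φ p.1 p.2)

/-- the attractor `F^φ_{b,γ}`, closure of `{(x, S(x,j)) : x ∈ [0,1), j ∈ Σ}`. -/
def attractor : Set (ℝ × ℝ) :=
  closure {p | ∃ x ∈ Ico (0 : ℝ) 1, ∃ j : ℕ → Fin b, p = (x, S b γ φ x j)}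

/-- condition (H). -/
def CondH : Prop :=
  ∀ i j : ℕ → Fin b, i ≠ j → ∃ x ∈ Icc (0 : ℝ) 1, S b γ φ x i ≠ S b γ φ x j

/-- condition (H*). -/
def CondHstar : Prop :=
  ∀ i j : ℕ → Fin b, ∀ x ∈ Icc (0 : ℝ) 1, S b γ φ x i = S b γ φ x j

/-- a measure is exact dimensional with dimension `β`. -/
def IsExactDim {X : Type*} [MetricSpace X] [MeasurableSpace X] (μ : Measure X) (β : ℝ) : Prop :=
  ∀ᵐ z ∂μ, Tendsto (fun r : ℝ => Real.log (μ (Metric.closedBall z r)).toReal / Real.log r)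
    (nhdsWithin 0 (Ioi 0)) (nhds β)

/-- the `b`-adic interval of level `n` with index `j`. -/
def badicI (n : ℕ) (j : ℤ) : Set ℝ := Ico ((j : ℝ) / (b : ℝ) ^ n) ((j + 1 : ℝ) / (b : ℝ) ^ n)

/-- the entropy `H(μ, L_n)` (in base-`b` logarithm). -/
def entropy (μ : Measure ℝ) (n : ℕ) : ℝ :=
  (∑' j : ℤ, Real.negMulLog (μ (badicI b n j)).toReal) / Real.log b

/-- the `b`-adic interval of level `n` containing `x`. -/
def badicAt (n : ℕ) (x : ℝ) : Set ℝ := badicI b n ⌊x * (b : ℝ) ^ n⌋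

/-- the component measure `μ_{x,n} = μ(· | L_n(x))`. -/
def component (μ : Measure ℝ) (n : ℕ) (x : ℝ) : Measure ℝ :=
  (μ (badicAt b n x))⁻¹ • μ.restrict (badicAt b n x)

/-- `μ` is `(h,δ,m)`-entropy porous from scale `n₁` to `n₂`. -/
def EntPorous (μ : Measure ℝ) (h δ : ℝ) (m n₁ n₂ : ℕ) : Prop :=
  (1 / (n₂ - n₁ + 1 : ℝ)) *
    ∑ i ∈ Finset.Icc n₁ n₂,
      (μ {x | (1 / m : ℝ) * entropy b (component b μ i x) (i + m) < h + δ}).toReal > 1 - δ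

/-! ### Self-similarity of the Bernoulli measure -/

/-- the sequence `a j₀ j₁ j₂ ⋯`. -/
def pcons {b : ℕ} (a : Fin b) (j : ℕ → Fin b) : ℕ → Fin b
  | 0 => a
  | n + 1 => j n

theorem measurable_pcons {b : ℕ} (a : Fin b) : Measurable (pcons a) := by
  refine measurable_pi_lambda _ fun n => ?_
  cases n with
  | zero => exact measurable_const
  | succ n => exact measurable_pi_apply n

theorem pcons_head_tail {b : ℕ} (j : ℕ → Fin b) : pcons (j 0) (fun n => j (n + 1)) = j := by
  funext n; cases n <;> rfl

/-- The cylinders, together with the empty set. -/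
def cyls (b : ℕ) : Set (Set (ℕ → Fin b)) :=
  {s | s = ∅ ∨ ∃ (n : ℕ) (w : Fin n → Fin b), s = {j | ∀ k : Fin n, j k = w k}}

/-- If two cylinders meet, their intersection is the one given by the longer word. -/
theorem isPiSystem_cyls (b : ℕ) : IsPiSystem (cyls b) := by
  rintro s (rfl | ⟨n, w, rfl⟩) t (rfl | ⟨m, v, rfl⟩) hne
  · exact Or.inl (by simp)
  · exact Or.inl (by simp)
  · exact Or.inl (by simp)
  · obtain ⟨i, hi, hi'⟩ := hne
    right
    rcases le_total n m with h | h
    · refine ⟨m, v, Set.inter_eq_right.2 fun j hj k => ?_⟩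
      have h1 := hj (Fin.castLE h k)
      have h2 := hi' (Fin.castLE h k)
      have h3 := hi k
      simp only [Fin.val_castLE] at h1 h2
      rw [h1, ← h2, h3]
    · refine ⟨n, w, Set.inter_eq_left.2 fun j hj k => ?_⟩
      have h1 := hj (Fin.castLE h k)
      have h2 := hi (Fin.castLE h k)
      have h3 := hi' k
      simp only [Fin.val_castLE] at h1 h2
      rw [h1, ← h2, h3]

theorem measurableSet_cyl {b : ℕ} (n : ℕ) (w : Fin n → Fin b) :
    MeasurableSet {j : ℕ → Fin b | ∀ k : Fin n, j k = w k} := by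
  rw [Set.ofPred_forall]
  exact MeasurableSet.iInter fun k => measurableSet_eq_fun (measurable_pi_apply (k : ℕ)) measurable_const

theorem generateFrom_cyls (b : ℕ) :
    (inferInstance : MeasurableSpace (ℕ → Fin b)) = MeasurableSpace.generateFrom (cyls b) := by
  apply le_antisymm
  · refine iSup_le fun n => ?_
    rintro _ ⟨t, -, rfl⟩
    -- the coordinate `j n` is determined by the first `n + 1` digits
    have : (fun j : ℕ → Fin b => j n) ⁻¹' t =
        ⋃ w : {w : Fin (n + 1) → Fin b // w (Fin.last n) ∈ t},
          {j : ℕ → Fin b | ∀ k : Fin (n + 1), j k = w.1 k} := by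
      ext j
      simp only [Set.mem_preimage, Set.mem_iUnion, Set.mem_ofPred_eq]
      constructor
      · intro h
        exact ⟨⟨fun k => j k, by simpa using h⟩, fun k => rfl⟩
      · rintro ⟨⟨w, hw⟩, h⟩
        have := h (Fin.last n)
        simp only [Fin.val_last] at this
        rwa [this]
    rw [this]
    exact MeasurableSet.iUnion fun w =>
      MeasurableSpace.measurableSet_generateFrom (Or.inr ⟨n + 1, w.1, rfl⟩)
  · refine MeasurableSpace.generateFrom_le ?_
    rintro s (rfl | ⟨n, w, rfl⟩)
    · exact MeasurableSet.empty
    · exact measurableSet_cyl n w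

theorem IsBernoulli.unique {b : ℕ} {μ ν : Measure (ℕ → Fin b)} (hμ : IsBernoulli b μ)
    (hν : IsBernoulli b ν) : μ = ν := by
  have := hμ.1
  have := hν.1
  refine ext_of_generate_finite _ (generateFrom_cyls b) (isPiSystem_cyls b) ?_ (by simp)
  rintro s (rfl | ⟨n, w, rfl⟩)
  · simp
  · rw [hμ.2, hν.2]

theorem IsBernoulli.eq_sum {b : ℕ} (hb : b ≠ 0) {ν : Measure (ℕ → Fin b)}
    (hν : IsBernoulli b ν) :
    ν = (b : ℝ≥0∞)⁻¹ • ∑ a : Fin b, ν.map (pcons a) := by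
  have hP := hν.1
  have hb' : (b : ℝ≥0∞) ≠ 0 := by exact_mod_cast hb
  refine hν.unique ⟨⟨?_⟩, ?_⟩
  · simp [Measure.map_apply (measurable_pcons _) MeasurableSet.univ,
      ENNReal.inv_mul_cancel hb' (ENNReal.natCast_ne_top b)]
  · intro n w
    cases n with
    | zero =>
      simp [Measure.map_apply (measurable_pcons _) MeasurableSet.univ,
        ENNReal.inv_mul_cancel hb' (ENNReal.natCast_ne_top b)]
    | succ n =>
      have h : ∀ a : Fin b,
          (ν.map (pcons a)) {j | ∀ k : Fin (n + 1), j k = w k} =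
            if a = w 0 then ((b : ℝ≥0∞) ^ n)⁻¹ else 0 := by
        intro a
        rw [Measure.map_apply (measurable_pcons a) (measurableSet_cyl _ w)]
        split_ifs with ha
        · rw [← hν.2 n (fun k => w k.succ)]
          congr 1
          ext j
          simp [Fin.forall_fin_succ, pcons, ha]
        · convert measure_empty (μ := ν)
          ext j
          simp [Fin.forall_fin_succ, pcons, ha]
      simp only [Measure.smul_apply, Measure.finsetSum_apply, h, Finset.sum_ite_eq',
        Finset.mem_univ, if_true, smul_eq_mul]
      rw [pow_succ, ENNReal.mul_inv (Or.inr (ENNReal.natCast_ne_top b)) (Or.inr hb'), mul_comm]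

theorem IsBernoulli.real_eq_sum {b : ℕ} (hb : b ≠ 0) {ν : Measure (ℕ → Fin b)}
    (hν : IsBernoulli b ν) {A : Set (ℕ → Fin b)} (hA : MeasurableSet A) :
    ν.real A = (b : ℝ)⁻¹ * ∑ a : Fin b, ν.real (pcons a ⁻¹' A) := by
  have := hν.1
  have h : ν A = (b : ℝ≥0∞)⁻¹ * ∑ a : Fin b, ν (pcons a ⁻¹' A) := by
    conv_lhs => rw [hν.eq_sum hb]
    simp [Measure.map_apply (measurable_pcons _) hA]
  simp only [Measure.real]
  rw [h, ENNReal.toReal_mul, ENNReal.toReal_sum fun a _ => measure_ne_top _ _]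
  simp

/-! ### The series `S(x,j)` -/

theorem exists_bound (φ : ℝ → ℝ) (hper : ∀ x : ℝ, φ (x + 1) = φ x) (hc : Continuous φ) :
    ∃ C : ℝ, 0 < C ∧ ∀ x, |φ x| ≤ C := by
  obtain ⟨C, hC⟩ := (isCompact_Icc (a := (0 : ℝ)) (b := 1)).exists_bound_of_continuousOn
    hc.continuousOn
  refine ⟨max C 1, by positivity, fun x => ?_⟩
  obtain ⟨y, hy, hxy⟩ := Function.Periodic.exists_mem_Ico₀ (f := φ) (c := 1) hper one_pos x
  rw [hxy]
  exact (hC y ⟨hy.1, hy.2.le⟩).trans (le_max_left _ _)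

section
variable {b : ℕ} {γ : ℝ} {φ : ℝ → ℝ} {C : ℝ}

theorem term_bound (hγ : γ ∈ Ioo (0 : ℝ) 1) (hC : ∀ x, |φ x| ≤ C) (n : ℕ) (t : ℝ) :
    ‖γ ^ n * φ t‖ ≤ C * γ ^ n := by
  have h := pow_pos hγ.1 n
  rw [Real.norm_eq_abs, abs_mul, abs_of_pos h, mul_comm]
  exact mul_le_mul_of_nonneg_right (hC t) h.le

theorem summable_bound (hγ : γ ∈ Ioo (0 : ℝ) 1) (C : ℝ) : Summable fun n : ℕ => C * γ ^ n :=
  (summable_geometric_of_lt_one hγ.1.le hγ.2).mul_left C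

theorem abs_S_le (hγ : γ ∈ Ioo (0 : ℝ) 1) (hC : ∀ x, |φ x| ≤ C) (x : ℝ) (j : ℕ → Fin b) :
    |S b γ φ x j| ≤ C * (1 - γ)⁻¹ := by
  refine tsum_of_norm_bounded (f := fun n : ℕ => γ ^ n * φ ((x + sval b j (n + 1)) / (b : ℝ) ^ (n + 1)))
    ((hasSum_geometric_of_lt_one hγ.1.le hγ.2).mul_left C) fun n => term_bound hγ hC n _

theorem continuous_S_left (hγ : γ ∈ Ioo (0 : ℝ) 1) (hC : ∀ x, |φ x| ≤ C) (hc : Continuous φ)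
    (j : ℕ → Fin b) : Continuous fun x => S b γ φ x j := by
  refine continuous_tsum (fun n => ?_) (summable_bound hγ C) fun n x => term_bound hγ hC n _
  fun_prop

theorem measurable_S (hγ : γ ∈ Ioo (0 : ℝ) 1) (hC : ∀ x, |φ x| ≤ C) (hc : Continuous φ)
    (x : ℝ) : Measurable (S b γ φ x) := by
  have hs : ∀ n, Continuous fun j : ℕ → Fin b => (sval b j n : ℝ) := fun n => by
    simp only [sval, Nat.cast_sum]
    refine continuous_finsetSum _ fun k _ => ?_
    exact (continuous_of_discreteTopology (f := fun a : Fin b => ((a.val * b ^ k : ℕ) : ℝ))).comp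
      (continuous_apply k)
  refine Continuous.measurable ?_
  refine continuous_tsum (fun n => ?_) (summable_bound hγ C) fun n j => term_bound hγ hC n _
  have := hs (n + 1)
  fun_prop

theorem sval_pcons (a : Fin b) (j : ℕ → Fin b) (n : ℕ) :
    sval b (pcons a j) (n + 1) = a.val + b * sval b j n := by
  simp only [sval]
  rw [Finset.sum_range_succ', Finset.mul_sum, add_comm]
  congr 1
  · simp [pcons]
  · refine Finset.sum_congr rfl fun k _ => ?_
    simp only [pcons]
    ring

/-- the inverse branch `a(x) = (x + a)/b` of `x ↦ b x mod 1`. -/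
def br (a : Fin b) (x : ℝ) : ℝ := (x + a.val) / b

theorem br_mem (a : Fin b) {x : ℝ} (hx : x ∈ Icc (0 : ℝ) 1) : br a x ∈ Icc (0 : ℝ) 1 := by
  have hb : (0 : ℝ) < b := by exact_mod_cast a.pos
  have h : (a.val : ℝ) + 1 ≤ b := by exact_mod_cast a.isLt
  have h0 : (0 : ℝ) ≤ a.val := by positivity
  refine ⟨div_nonneg (add_nonneg hx.1 h0) hb.le, ?_⟩
  rw [br, div_le_one hb]
  linarith [hx.2]

theorem S_pcons (hγ : γ ∈ Ioo (0 : ℝ) 1) (hC : ∀ x, |φ x| ≤ C) (x : ℝ) (a : Fin b)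
    (j : ℕ → Fin b) :
    S b γ φ x (pcons a j) = φ (br a x) + γ * S b γ φ (br a x) j := by
  have hb : (b : ℝ) ≠ 0 := by exact_mod_cast a.pos.ne'
  unfold S
  rw [Summable.tsum_eq_zero_add
    ((summable_bound hγ C).of_norm_bounded fun n => term_bound hγ hC n _), ← tsum_mul_left]
  congr 1
  · simp [sval, br, pcons]
  · refine tsum_congr fun n => ?_
    rw [sval_pcons, pow_succ γ, mul_comm (γ ^ n), mul_assoc]
    congr 3
    rw [br]
    push_cast
    field_simp
    ring

/-! ### Uniform spread of `S(x,·)` -/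

/-- If `S(x,·)` oscillates by at least `η` for all `x` that are `b⁻ᴺ`-close to `z`, then it oscillates
by at least `γᴺ η` for all `x ∈ [0,1]`: some inverse branch of order `N` sends `x` close to `z`. -/
theorem spread_of_near (hb : b ≠ 0) (hγ : γ ∈ Ioo (0 : ℝ) 1) (hC : ∀ x, |φ x| ≤ C) (N : ℕ) :
    ∀ (η : ℝ), ∀ z ∈ Icc (0 : ℝ) 1,
      (∀ x ∈ Icc (0 : ℝ) 1, |x - z| ≤ ((b : ℝ) ^ N)⁻¹ →
        ∃ i j : ℕ → Fin b, η ≤ |S b γ φ x i - S b γ φ x j|) →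
      ∀ x ∈ Icc (0 : ℝ) 1, ∃ i j : ℕ → Fin b, γ ^ N * η ≤ |S b γ φ x i - S b γ φ x j| := by
  have hb0 : (0 : ℝ) < b := by positivity
  induction N with
  | zero =>
    intro η z hz h x hx
    simp only [pow_zero, one_mul, inv_one] at h ⊢
    exact h x hx (abs_le.2 ⟨by linarith [hx.1, hz.2], by linarith [hx.2, hz.1]⟩)
  | succ N ih =>
    intro η z hz h x hx
    -- `z` lies in the image of some branch `a`
    obtain ⟨a, z', hz', rfl⟩ : ∃ a : Fin b, ∃ z' ∈ Icc (0 : ℝ) 1, z = br a z' := by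
      rcases hz.2.eq_or_lt with rfl | hlt
      · refine ⟨⟨b - 1, by omega⟩, 1, by simp, ?_⟩
        have : 1 ≤ b := by omega
        simp [br, Nat.cast_sub this, hb0.ne']
      · have h0 : 0 ≤ z * b := mul_nonneg hz.1 hb0.le
        refine ⟨⟨⌊z * b⌋₊, ?_⟩, z * b - ⌊z * b⌋₊, ⟨?_, ?_⟩, ?_⟩
        · rw [Nat.floor_lt h0]
          nlinarith
        · linarith [Nat.floor_le h0]
        · linarith [Nat.lt_floor_add_one (z * b)]
        · simp [br, hb0.ne']
    have key := ih (γ * η) z' hz' (fun x hx hxz => by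
      obtain ⟨i, j, hij⟩ := h (br a x) (br_mem a hx) (by
        have : br a x - br a z' = (x - z') / b := by simp only [br]; ring
        rw [this, abs_div, abs_of_pos hb0, pow_succ, mul_inv, div_eq_mul_inv]
        exact mul_le_mul_of_nonneg_right hxz (by positivity))
      refine ⟨pcons a i, pcons a j, ?_⟩
      rw [S_pcons hγ hC, S_pcons hγ hC, add_sub_add_left_eq_sub, ← mul_sub, abs_mul,
        abs_of_pos hγ.1]
      exact mul_le_mul_of_nonneg_left hij hγ.1.le) x hx
    rwa [pow_succ, mul_assoc]

theorem uniform_spread (hb : 2 ≤ b) (hγ : γ ∈ Ioo (0 : ℝ) 1) (hC : ∀ x, |φ x| ≤ C)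
    (hc : Continuous φ) (hH : CondH b γ φ) :
    ∃ η : ℝ, 0 < η ∧ ∀ x ∈ Icc (0 : ℝ) 1, ∃ i j : ℕ → Fin b,
      η ≤ |S b γ φ x i - S b γ φ x j| := by
  obtain ⟨z, hz, hne⟩ := hH (fun _ => ⟨0, by omega⟩) (fun _ => ⟨1, by omega⟩) (fun h => by
    simpa using congrFun h 0)
  set i : ℕ → Fin b := fun _ => ⟨0, by omega⟩
  set j : ℕ → Fin b := fun _ => ⟨1, by omega⟩
  have hpos : 0 < |S b γ φ z i - S b γ φ z j| := abs_pos.2 (sub_ne_zero.2 hne)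
  have hcont : Continuous fun x => |S b γ φ x i - S b γ φ x j| :=
    ((continuous_S_left hγ hC hc i).sub (continuous_S_left hγ hC hc j)).abs
  obtain ⟨ρ, hρ, hball⟩ := Metric.eventually_nhds_iff.1
    (hcont.continuousAt.eventually (lt_mem_nhds (half_lt_self hpos)))
  obtain ⟨N, hN⟩ := exists_pow_lt_of_lt_one hρ
    (inv_lt_one_of_one_lt₀ (by exact_mod_cast (by omega : 1 < b) : (1 : ℝ) < b))
  refine ⟨γ ^ N * (|S b γ φ z i - S b γ φ z j| / 2), by have := pow_pos hγ.1 N; positivity, ?_⟩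
  refine spread_of_near (by omega) hγ hC N _ z hz fun x _ hxz => ⟨i, j, (hball ?_).le⟩
  rw [Real.dist_eq]
  rw [inv_pow] at hN
  exact hxz.trans_lt hN

/-! ### Small balls have uniformly small mass -/

/-- The self-similarity relation for `m_x`, evaluated on balls. -/
theorem mMeas_ball_step (hb : b ≠ 0) (hγ : γ ∈ Ioo (0 : ℝ) 1) (hC : ∀ x, |φ x| ≤ C)
    (hc : Continuous φ) {ν : Measure (ℕ → Fin b)} (hν : IsBernoulli b ν) (x y r : ℝ) :
    (mMeas b γ φ ν x).real (Metric.closedBall y (γ * r)) =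
      (b : ℝ)⁻¹ * ∑ a : Fin b,
        (mMeas b γ φ ν (br a x)).real (Metric.closedBall ((y - φ (br a x)) / γ) r) := by
  have hm := fun x => measurable_S (b := b) hγ hC hc x
  simp only [mMeas]
  rw [map_measureReal_apply (hm x) Metric.isClosed_closedBall.measurableSet,
    hν.real_eq_sum hb (hm x Metric.isClosed_closedBall.measurableSet)]
  congr 1
  refine Finset.sum_congr rfl fun a _ => ?_
  rw [map_measureReal_apply (hm _) Metric.isClosed_closedBall.measurableSet]
  congr 1
  ext j
  simp only [Set.mem_preimage, Metric.mem_closedBall, Real.dist_eq, S_pcons hγ hC]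
  have : φ (br a x) + γ * S b γ φ (br a x) j - y =
      γ * (S b γ φ (br a x) j - (y - φ (br a x)) / γ) := by
    have := hγ.1.ne'
    field_simp
    ring
  rw [this, abs_mul, abs_of_pos hγ.1, mul_le_mul_iff_right₀ hγ.1]

theorem isProb_mMeas (hγ : γ ∈ Ioo (0 : ℝ) 1) (hC : ∀ x, |φ x| ≤ C)
    (hc : Continuous φ) {ν : Measure (ℕ → Fin b)} (hν : IsBernoulli b ν) (x : ℝ) :
    IsProbabilityMeasure (mMeas b γ φ ν x) := by
  have := hν.1
  exact Measure.isProbabilityMeasure_map (measurable_S hγ hC hc x).aemeasurable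

theorem mMeas_ball_eq_zero (hγ : γ ∈ Ioo (0 : ℝ) 1) (hC : ∀ x, |φ x| ≤ C)
    (hc : Continuous φ) {ν : Measure (ℕ → Fin b)} (x y r : ℝ)
    (h : ∀ j, r < |S b γ φ x j - y|) :
    (mMeas b γ φ ν x).real (Metric.closedBall y r) = 0 := by
  rw [mMeas, map_measureReal_apply (measurable_S hγ hC hc x)
    Metric.isClosed_closedBall.measurableSet]
  convert measureReal_empty (μ := ν)
  ext j
  simpa [Real.dist_eq] using h j

theorem mMeas_ball_eq_one (hγ : γ ∈ Ioo (0 : ℝ) 1) (hC : ∀ x, |φ x| ≤ C)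
    (hc : Continuous φ) {ν : Measure (ℕ → Fin b)} (hν : IsBernoulli b ν) (x y r : ℝ)
    (h : ∀ j, |S b γ φ x j - y| ≤ r) :
    (mMeas b γ φ ν x).real (Metric.closedBall y r) = 1 := by
  have := hν.1
  rw [mMeas, map_measureReal_apply (measurable_S hγ hC hc x)
    Metric.isClosed_closedBall.measurableSet]
  convert probReal_univ (μ := ν)
  ext j
  simpa [Real.dist_eq] using h j

/-- If `S(x,j)` is far from `y` at scale `γⁿ`, the ball `B(y,γⁿ d)` misses the image of the cylinder
of length `n` around `j`, which saves a proportion `b⁻ⁿ` of the mass. -/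
theorem gain (hb : b ≠ 0) (hγ : γ ∈ Ioo (0 : ℝ) 1) (hC : ∀ x, |φ x| ≤ C)
    (hc : Continuous φ) {ν : Measure (ℕ → Fin b)} (hν : IsBernoulli b ν) {M c d : ℝ}
    (hM : ∀ x (j : ℕ → Fin b), |S b γ φ x j| ≤ M)
    (hcd : ∀ x ∈ Icc (0 : ℝ) 1, ∀ y,
      (mMeas b γ φ ν x).real (Metric.closedBall y d) ≤ c) (n : ℕ) :
    (∀ x ∈ Icc (0 : ℝ) 1, ∀ y,
      (mMeas b γ φ ν x).real (Metric.closedBall y (γ ^ n * d)) ≤ c) ∧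
    ∀ x ∈ Icc (0 : ℝ) 1, ∀ y, ∀ j : ℕ → Fin b, γ ^ n * (d + 2 * M) < |S b γ φ x j - y| →
      (mMeas b γ φ ν x).real (Metric.closedBall y (γ ^ n * d)) ≤ (1 - ((b : ℝ) ^ n)⁻¹) * c := by
  have hb0 : (0 : ℝ) < b := by positivity
  induction n with
  | zero =>
    refine ⟨by simpa using hcd, fun x hx y j hj => ?_⟩
    simp only [pow_zero, one_mul, inv_one, sub_self, zero_mul] at hj ⊢
    refine (mMeas_ball_eq_zero hγ hC hc x y d fun i => ?_).le
    have h1 := abs_le.1 (hM x i)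
    have h2 := abs_le.1 (hM x j)
    have h3 : |S b γ φ x j - y| ≤ |S b γ φ x i - y| + |S b γ φ x j - S b γ φ x i| := by
      have := abs_add_le (S b γ φ x i - y) (S b γ φ x j - S b γ φ x i)
      rwa [show S b γ φ x i - y + (S b γ φ x j - S b γ φ x i) = S b γ φ x j - y by ring] at this
    have h4 : |S b γ φ x j - S b γ φ x i| ≤ 2 * M := abs_le.2 ⟨by linarith, by linarith⟩
    linarith
  | succ n ih =>
    obtain ⟨ih1, ih2⟩ := ih
    have hs : ∀ x ∈ Icc (0 : ℝ) 1, ∀ y, ∀ a : Fin b,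
        (mMeas b γ φ ν (br a x)).real
          (Metric.closedBall ((y - φ (br a x)) / γ) (γ ^ n * d)) ≤ c :=
      fun x hx y a => ih1 _ (br_mem a hx) _
    refine ⟨fun x hx y => ?_, fun x hx y j hj => ?_⟩
    · rw [pow_succ', mul_assoc, mMeas_ball_step hb hγ hC hc hν, inv_mul_le_iff₀ hb0]
      simpa using Finset.sum_le_sum fun a (_ : a ∈ Finset.univ) => hs x hx y a
    · rw [pow_succ' γ, mul_assoc, mMeas_ball_step hb hγ hC hc hν, inv_mul_le_iff₀ hb0,
        ← Finset.add_sum_erase _ _ (Finset.mem_univ (j 0))]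
      have h1 := ih2 (br (j 0) x) (br_mem _ hx) ((y - φ (br (j 0) x)) / γ) (fun n => j (n + 1)) (by
        rw [← pcons_head_tail j, S_pcons hγ hC] at hj
        have h2 : φ (br (j 0) x) + γ * S b γ φ (br (j 0) x) (fun n => j (n + 1)) - y =
            γ * (S b γ φ (br (j 0) x) (fun n => j (n + 1)) - (y - φ (br (j 0) x)) / γ) := by
          have := hγ.1.ne'
          field_simp
          ring
        change _ < |φ (br (j 0) x) + γ * S b γ φ (br (j 0) x) (fun n => j (n + 1)) - y| at hj
        rw [h2, abs_mul, abs_of_pos hγ.1, pow_succ', mul_assoc] at hj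
        exact lt_of_mul_lt_mul_left hj hγ.1.le)
      have h2 := Finset.sum_le_sum fun a (_ : a ∈ Finset.univ.erase (j 0)) => hs x hx y a
      rw [Finset.sum_const, Finset.card_erase_of_mem (Finset.mem_univ _), Finset.card_univ,
        Fintype.card_fin, nsmul_eq_mul, Nat.cast_sub (Nat.one_le_iff_ne_zero.2 hb)] at h2
      refine (add_le_add h1 h2).trans_eq ?_
      push_cast
      field_simp
      ring

theorem exists_uniform_small (hb : 2 ≤ b) (hγ : γ ∈ Ioo (0 : ℝ) 1) (hC : ∀ x, |φ x| ≤ C)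
    (hc : Continuous φ) (hH : CondH b γ φ) {ν : Measure (ℕ → Fin b)} (hν : IsBernoulli b ν)
    {M : ℝ} (hM : ∀ x (j : ℕ → Fin b), |S b γ φ x j| ≤ M) {ε : ℝ} (hε : 0 < ε) :
    ∃ d : ℝ, 0 < d ∧ d ≤ 1 ∧ ∀ x ∈ Icc (0 : ℝ) 1, ∀ y,
      (mMeas b γ φ ν x).real (Metric.closedBall y d) ≤ ε := by
  obtain ⟨η, hη, hsp⟩ := uniform_spread hb hγ hC hc hH
  have hM0 : 0 ≤ M := (abs_nonneg _).trans (hM 0 fun _ => ⟨0, by omega⟩)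
  -- at scale `γⁿ` a cylinder of length `n` is much smaller than the oscillation `η`
  obtain ⟨n, hn⟩ := exists_pow_lt_of_lt_one
    (show 0 < η / 2 / (1 + 2 * M) by positivity) hγ.2
  rw [lt_div_iff₀ (by positivity)] at hn
  set q : ℝ := 1 - ((b : ℝ) ^ n)⁻¹ with hq
  have hb1 : (1 : ℝ) ≤ b := by exact_mod_cast (by omega : 1 ≤ b)
  have hq0 : 0 ≤ q := sub_nonneg.2 (inv_le_one_of_one_le₀ (one_le_pow₀ hb1))
  have hq1 : q < 1 := sub_lt_self _ (by positivity)
  have hγn := pow_pos hγ.1 n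
  have hγn1 : γ ^ n ≤ 1 := pow_le_one₀ hγ.1.le hγ.2.le
  have iter : ∀ k : ℕ, ∀ x ∈ Icc (0 : ℝ) 1, ∀ y,
      (mMeas b γ φ ν x).real (Metric.closedBall y ((γ ^ n) ^ k)) ≤ q ^ k := by
    intro k
    induction k with
    | zero =>
      intro x _ y
      have := isProb_mMeas hγ hC hc hν x
      simp
    | succ k ih =>
      intro x hx y
      obtain ⟨j, hj⟩ : ∃ j, η / 2 ≤ |S b γ φ x j - y| := by
        obtain ⟨i, j, hij⟩ := hsp x hx
        by_contra! hcon
        have h1 := abs_lt.1 (hcon i)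
        have h2 := abs_lt.1 (hcon j)
        have h3 : |S b γ φ x i - S b γ φ x j| < η := abs_lt.2 ⟨by linarith, by linarith⟩
        linarith
      rw [pow_succ', pow_succ']
      refine (gain (by omega) hγ hC hc hν hM ih n).2 x hx y j (lt_of_le_of_lt ?_ (hn.trans_le hj))
      refine mul_le_mul_of_nonneg_left ?_ hγn.le
      linarith [pow_le_one₀ hγn.le hγn1 (n := k)]
  obtain ⟨k, hk⟩ := exists_pow_lt_of_lt_one hε hq1
  exact ⟨(γ ^ n) ^ k, pow_pos hγn k, pow_le_one₀ hγn.le hγn1,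
    fun x hx y => (iter k x hx y).trans hk.le⟩

/-! ### Transfer to all scales -/

theorem scaling (hb : b ≠ 0) (hγ : γ ∈ Ioo (0 : ℝ) 1) (hC : ∀ x, |φ x| ≤ C)
    (hc : Continuous φ) {ν : Measure (ℕ → Fin b)} (hν : IsBernoulli b ν) {M ε d R : ℝ}
    (hM : ∀ x (j : ℕ → Fin b), |S b γ φ x j| ≤ M) (hε : 0 ≤ ε) (hR : 2 * M + d ≤ R)
    (hd : ∀ x ∈ Icc (0 : ℝ) 1, ∀ y,
      (mMeas b γ φ ν x).real (Metric.closedBall y d) ≤ ε) (n : ℕ) :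
    ∀ x ∈ Icc (0 : ℝ) 1, ∀ y,
      (mMeas b γ φ ν x).real (Metric.closedBall y (γ ^ n * d)) ≤
        ε * (mMeas b γ φ ν x).real (Metric.closedBall y (γ ^ n * R)) := by
  induction n with
  | zero =>
    intro x hx y
    simp only [pow_zero, one_mul]
    by_cases h : ∃ i, |S b γ φ x i - y| ≤ d
    · obtain ⟨i, hi⟩ := h
      rw [mMeas_ball_eq_one hγ hC hc hν x y R fun j => ?_, mul_one]
      · exact hd x hx y
      · have h1 := abs_le.1 (hM x i)
        have h2 := abs_le.1 (hM x j)
        have h3 := abs_le.1 hi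
        exact abs_le.2 ⟨by linarith, by linarith⟩
    · push Not at h
      rw [mMeas_ball_eq_zero hγ hC hc x y d h]
      exact mul_nonneg hε measureReal_nonneg
  | succ n ih =>
    intro x hx y
    rw [pow_succ', mul_assoc, mul_assoc, mMeas_ball_step hb hγ hC hc hν,
      mMeas_ball_step hb hγ hC hc hν, mul_left_comm]
    refine mul_le_mul_of_nonneg_left ?_ (by positivity)
    rw [Finset.mul_sum]
    exact Finset.sum_le_sum fun a _ => ih _ (br_mem a hx) _

end

/-- Under condition (H) the family `{m_x}_{x∈[0,1]}` is jointly uniformly continuous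
across scales. -/
theorem jointly_uniformly_continuous_across_scales (b : ℕ) (hb : 2 ≤ b)
    (γ : ℝ) (hγ : γ ∈ Ioo (0 : ℝ) 1)
    (φ : ℝ → ℝ) (hper : ∀ x : ℝ, φ (x + 1) = φ x) (K : ℝ≥0) (hlip : LipschitzWith K φ)
    (hH : CondH b γ φ) (ν : Measure (ℕ → Fin b)) (hν : IsBernoulli b ν) :
    ∀ ε : ℝ, 0 < ε → ∃ δ : ℝ, 0 < δ ∧
      ∀ x ∈ Icc (0 : ℝ) 1, ∀ y : ℝ, ∀ r ∈ Ioo (0 : ℝ) 1,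
        mMeas b γ φ ν x (Metric.closedBall y (δ * r)) ≤
          ENNReal.ofReal ε * mMeas b γ φ ν x (Metric.closedBall y r) := by
  intro ε hε
  have hc := hlip.continuous
  obtain ⟨C, hC0, hC⟩ := exists_bound φ hper hc
  have hM := fun x (j : ℕ → Fin b) => abs_S_le (b := b) hγ hC x j
  set M : ℝ := C * (1 - γ)⁻¹ with hMdef
  have hM0 : 0 ≤ M := mul_nonneg hC0.le (inv_nonneg.2 (sub_nonneg.2 hγ.2.le))
  obtain ⟨d, hd0, hd1, hd⟩ := exists_uniform_small hb hγ hC hc hH hν hM hε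
  set R : ℝ := 2 * M + 1 with hRdef
  have hR1 : 1 ≤ R := by linarith
  have hR0 : 0 < R := by linarith
  have hγ0 := hγ.1
  refine ⟨γ * d / R, by positivity, fun x hx y r hr => ?_⟩
  -- `γ ^ (n + 1) * R < r ≤ γ ^ n * R`
  obtain ⟨n, hn1, hn2⟩ := exists_nat_pow_near_of_lt_one (div_pos hr.1 hR0)
    ((div_le_one hR0).2 (hr.2.le.trans hR1)) hγ.1 hγ.2
  rw [lt_div_iff₀ hR0] at hn1
  have hle : γ * d / R * r ≤ γ ^ (n + 1) * d := by
    calc γ * d / R * r = γ * d * (r / R) := by ring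
      _ ≤ γ * d * γ ^ n := mul_le_mul_of_nonneg_left hn2 (by positivity)
      _ = γ ^ (n + 1) * d := by ring
  have := isProb_mMeas hγ hC hc hν x
  have key : (mMeas b γ φ ν x).real (Metric.closedBall y (γ * d / R * r)) ≤
      ε * (mMeas b γ φ ν x).real (Metric.closedBall y r) :=
    calc _ ≤ (mMeas b γ φ ν x).real (Metric.closedBall y (γ ^ (n + 1) * d)) :=
          measureReal_mono (Metric.closedBall_subset_closedBall hle)
      _ ≤ ε * (mMeas b γ φ ν x).real (Metric.closedBall y (γ ^ (n + 1) * R)) :=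
          scaling (by omega) hγ hC hc hν hM hε.le (by linarith) hd (n + 1) x hx y
      _ ≤ _ := mul_le_mul_of_nonneg_left
          (measureReal_mono (Metric.closedBall_subset_closedBall hn1.le)) hε.le
  rw [← ofReal_measureReal (μ := mMeas b γ φ ν x) (s := Metric.closedBall y (γ * d / R * r)),
    ← ofReal_measureReal (μ := mMeas b γ φ ν x) (s := Metric.closedBall y r),
    ← ENNReal.ofReal_mul hε.le]
  exact ENNReal.ofReal_le_ofReal key

end
end Skew
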